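/- (Finite-dimensional Gaussian ESJD and acceptance-rate formulae.) Let d ≥ 1, λ > 0, let X ∼ N(0, I_d) and Z ∼ N(0, I_d) be independent, and let B be a real random variable independent of (X, Z) with a Lebesgue density ρ satisfying ρ(b) = e^{−b} ρ(−b) (for example B ∼ N(−σ², 2σ²)). Write L(x) = −‖x‖²/2 for the log-density of N(0, I_d) up to an additive constant. Then E[ ‖λZ‖² · min(1, exp(L(X + λZ) − L(X) + B)) ] = 2 λ² · E[ ‖Z‖² · Φ( −(λ/2)‖Z‖ + B/(λ‖Z‖) ) ] and E[ min(1, exp(L(X + λZ) − L(X) + B)) ] = 2 · E[ Φ( −(λ/2)‖Z‖ + B/(λ‖Z‖) ) ], where Φ is the standard normal cumulative distribution function and ‖·‖ the Euclidean norm on ℝ^d. -/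

import Mathlib

open MeasureTheory ProbabilityTheory Real

/-- The standard normal cumulative distribution function `Φ`. -/
noncomputable def stdNormalCDF (x : ℝ) : ℝ :=
  ∫ t in Set.Iic x, Real.exp (-t ^ 2 / 2) / Real.sqrt (2 * Real.pi)

/-- The standard Gaussian measure `N(0, I_d)` on `ℝ^d`. -/
noncomputable def stdGaussian (d : ℕ) : Measure (Fin d → ℝ) :=
  Measure.pi fun _ : Fin d => gaussianReal 0 1

/-!
Given `Z = z ≠ 0`, the log-ratio `V = L (X + λ z) - L X` has law `N(-s² / 2, s²)` with `s = λ ‖z‖`.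
The densities of `V` and of `B` both satisfy `ρ b = e ^ (-b) ρ (-b)`, and this detailed-balance
identity passes to the independent sum `W = V + B`. It turns `e ^ w P(W ∈ dw)` into the law of
`-W`, so `E[min(1, e ^ W)] = P(W ≥ 0) + E[e ^ W; W < 0] = P(W ≥ 0) + P(W > 0) = 2 P(W ≥ 0)`, as `W`
has no atom at `0`. Finally `P(V ≥ -b) = Φ(b / s - s / 2)`, to be averaged over `B` and then,
with the required weight, over `Z`.
-/

open Set WithLp
open scoped ENNReal NNReal

lemma stdNormalCDF_eq_cdf : stdNormalCDF = cdf (gaussianReal 0 1) := by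
  ext x
  have hpdf (t : ℝ) : exp (-t ^ 2 / 2) / √(2 * π) = gaussianPDFReal 0 1 t := by
    simp [gaussianPDFReal, div_eq_inv_mul]
  rw [cdf_eq_real, measureReal_def, gaussianReal_apply_eq_integral _ one_ne_zero,
    ENNReal.toReal_ofReal (integral_nonneg fun _ ↦ gaussianPDFReal_nonneg _ _ _)]
  simp only [stdNormalCDF, hpdf]

@[fun_prop]
lemma measurable_stdNormalCDF : Measurable stdNormalCDF :=
  stdNormalCDF_eq_cdf ▸ (monotone_cdf _).measurable

lemma norm_stdNormalCDF_le_one (x : ℝ) : ‖stdNormalCDF x‖ ≤ 1 := by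
  rw [stdNormalCDF_eq_cdf, norm_of_nonneg (cdf_nonneg _ _)]
  exact cdf_le_one _ _

lemma measureReal_gaussianReal_Ici (m a : ℝ) {s : ℝ≥0} (hs : s ≠ 0) :
    (gaussianReal m (s ^ 2)).real (Ici a) = stdNormalCDF ((m - a) / s) := by
  have hs' : (0 : ℝ) < s := by positivity
  have hmap : (gaussianReal 0 1).map (fun y ↦ m - s * y) = gaussianReal m (s ^ 2) := by
    have hcomp : (fun y : ℝ ↦ m - s * y) = (m - ·) ∘ (s * · : ℝ → ℝ) := rfl
    rw [hcomp, ← Measure.map_map (by fun_prop) (by fun_prop), gaussianReal_map_const_mul,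
      gaussianReal_map_const_sub]
    congr 1
    · simp
    · ext; simp
  have hpre : (fun y : ℝ ↦ m - s * y) ⁻¹' Ici a = Iic ((m - a) / s) := by
    ext y
    rw [mem_preimage, mem_Ici, mem_Iic, le_div_iff₀ hs', le_sub_comm, mul_comm]
  rw [← hmap, map_measureReal_apply (by fun_prop) measurableSet_Ici, hpre, stdNormalCDF_eq_cdf,
    cdf_eq_real]

lemma norm_min_one_exp_le_one (t : ℝ) : ‖min 1 (exp t)‖ ≤ 1 := by
  rw [norm_of_nonneg (le_min zero_le_one (exp_pos t).le)]
  exact min_le_left _ _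

/-- Detailed balance for the law `μ` of a log-ratio: the reflection of `μ` is `e ^ b μ(db)`. For a
law with density `ρ` this is `ρ b = e ^ (-b) ρ (-b)`. It is stated for measures because it is
inherited by convolutions and does not need a density. -/
def IsExpBalanced (μ : Measure ℝ) : Prop :=
  μ.map Neg.neg = μ.withDensity fun b ↦ ENNReal.ofReal (exp b)

lemma isExpBalanced_withDensity {ρ : ℝ → ℝ} (hρ : Measurable ρ)
    (hsymm : ∀ b, ρ b = exp (-b) * ρ (-b)) :
    IsExpBalanced (volume.withDensity fun b ↦ ENNReal.ofReal (ρ b)) := by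
  have hneg (b : ℝ) : ENNReal.ofReal (ρ b) * ENNReal.ofReal (exp b) = ENNReal.ofReal (ρ (-b)) := by
    rw [← ENNReal.ofReal_mul' (exp_nonneg b), hsymm (-b), neg_neg, mul_comm]
  ext s hs
  rw [Measure.map_apply measurable_neg hs, withDensity_apply _ (measurable_neg hs),
    ← withDensity_mul _ (by fun_prop) (by fun_prop), withDensity_apply _ hs,
    ← (Measure.measurePreserving_neg volume).setLIntegral_comp_preimage hs (by fun_prop)]
  refine lintegral_congr fun b ↦ ?_
  rw [Pi.mul_apply, hneg, neg_neg]

lemma isExpBalanced_gaussianReal {v : ℝ≥0} (hv : v ≠ 0) :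
    IsExpBalanced (gaussianReal (-(v / 2)) v) := by
  have hv' : (v : ℝ) ≠ 0 := by exact_mod_cast hv
  rw [gaussianReal_of_var_ne_zero _ hv]
  refine isExpBalanced_withDensity (by fun_prop) fun b ↦ ?_
  rw [gaussianPDFReal, gaussianPDFReal, mul_left_comm, ← exp_add]
  congr 2
  field

lemma measureReal_conv_Ici (μ ν : Measure ℝ) [IsFiniteMeasure μ] [IsFiniteMeasure ν] (a : ℝ) :
    (μ ∗ ν).real (Ici a) = ∫ b, μ.real (Ici (a - b)) ∂ν := by
  have hS : MeasurableSet ((fun p : ℝ × ℝ ↦ p.1 + p.2) ⁻¹' Ici a) :=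
    measurable_add measurableSet_Ici
  have hslice (b : ℝ) :
      (fun x ↦ (x, b)) ⁻¹' ((fun p : ℝ × ℝ ↦ p.1 + p.2) ⁻¹' Ici a) = Ici (a - b) := by
    ext x
    simp only [mem_preimage, mem_Ici, sub_le_iff_le_add]
  rw [Measure.conv, map_measureReal_apply measurable_add measurableSet_Ici, measureReal_def,
    Measure.prod_apply_symm hS,
    ← integral_toReal (measurable_measure_prodMk_right hS).aemeasurable
      (ae_of_all _ fun _ ↦ measure_lt_top _ _)]
  simp only [hslice, measureReal_def]

namespace IsExpBalanced

variable {μ ν : Measure ℝ}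

lemma lintegral_exp_mul (hμ : IsExpBalanced μ) {f : ℝ → ℝ≥0∞} (hf : Measurable f) :
    ∫⁻ b, ENNReal.ofReal (exp b) * f b ∂μ = ∫⁻ b, f (-b) ∂μ := by
  rw [← lintegral_map hf measurable_neg, hμ,
    lintegral_withDensity_eq_lintegral_mul _ (by fun_prop) hf]
  rfl

lemma conv [SFinite μ] [SFinite ν] (hμ : IsExpBalanced μ) (hν : IsExpBalanced ν) :
    IsExpBalanced (μ ∗ ν) := by
  refine Measure.ext_of_lintegral _ fun f hf ↦ ?_
  rw [lintegral_map hf measurable_neg, Measure.lintegral_conv (by fun_prop),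
    lintegral_withDensity_eq_lintegral_mul _ (by fun_prop) hf, Measure.lintegral_conv (by fun_prop)]
  simp only [Pi.mul_apply]
  calc ∫⁻ x, ∫⁻ y, f (-(x + y)) ∂ν ∂μ
      = ∫⁻ x, ENNReal.ofReal (exp x) * ∫⁻ y, f (x - y) ∂ν ∂μ := by
        rw [hμ.lintegral_exp_mul (by fun_prop)]
        simp only [neg_add']
    _ = ∫⁻ x, ENNReal.ofReal (exp x) * ∫⁻ y, ENNReal.ofReal (exp y) * f (x + y) ∂ν ∂μ := by
        congr! 3 with x
        rw [hν.lintegral_exp_mul (by fun_prop)]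
        simp only [sub_eq_add_neg]
    _ = ∫⁻ x, ∫⁻ y, ENNReal.ofReal (exp (x + y)) * f (x + y) ∂ν ∂μ := by
        congr! 2 with x
        rw [← lintegral_const_mul _ (by fun_prop)]
        simp only [exp_add, ENNReal.ofReal_mul (exp_nonneg _), mul_assoc]

lemma integral_min_one_exp [IsFiniteMeasure μ] (hμ : IsExpBalanced μ) (hμ₀ : μ {0} = 0) :
    ∫ w, min 1 (exp w) ∂μ = 2 * μ.real (Ici 0) := by
  have hint : Integrable (fun w ↦ min 1 (exp w)) μ :=
    .of_bound (by fun_prop) 1 (ae_of_all _ norm_min_one_exp_le_one)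
  have hIci : ∫ w in Ici 0, min 1 (exp w) ∂μ = μ.real (Ici 0) := by
    rw [setIntegral_congr_fun (g := fun _ ↦ 1) measurableSet_Ici
      fun w hw ↦ min_eq_left (one_le_exp hw)]
    simp
  have hIio : ∫ w in Iio 0, min 1 (exp w) ∂μ = μ.real (Ici 0) := by
    calc ∫ w in Iio 0, min 1 (exp w) ∂μ
        = ∫ w in Iio 0, exp w ∂μ := setIntegral_congr_fun measurableSet_Iio
          fun w hw ↦ min_eq_right (exp_le_one_iff.2 (mem_Iio.1 hw).le)
      _ = (μ.withDensity fun w ↦ ENNReal.ofReal (exp w)).real (Iio 0) := by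
        rw [integral_eq_lintegral_of_nonneg_ae (ae_of_all _ fun w ↦ exp_nonneg w) (by fun_prop),
          measureReal_def, withDensity_apply _ measurableSet_Iio]
      _ = μ.real (Ioi 0) := by
        rw [← hμ, map_measureReal_apply measurable_neg measurableSet_Iio, neg_preimage, neg_Iio,
          neg_zero]
      _ = μ.real (Ici 0) := measureReal_congr (Ioi_ae_eq_Ici' hμ₀)
  rw [← integral_add_compl measurableSet_Ici hint, compl_Ici, hIci, hIio, two_mul]

lemma integral_min_one_exp_gaussianReal_conv [IsFiniteMeasure μ] (hμ : IsExpBalanced μ)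
    {s : ℝ≥0} (hs : s ≠ 0) :
    ∫ w, min 1 (exp w) ∂(gaussianReal (-(s ^ 2 / 2)) (s ^ 2) ∗ μ) =
      2 * ∫ b, stdNormalCDF (-(s / 2) + b / s) ∂μ := by
  have hs' : (s : ℝ) ≠ 0 := by exact_mod_cast hs
  have hgauss : IsExpBalanced (gaussianReal (-(s ^ 2 / 2)) (s ^ 2)) := by
    simpa using isExpBalanced_gaussianReal (pow_ne_zero 2 hs)
  have hnull : (gaussianReal (-(s ^ 2 / 2)) (s ^ 2) ∗ μ) {0} = 0 := by
    rw [Measure.conv_comm]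
    exact Measure.conv_absolutelyContinuous
      (gaussianReal_absolutelyContinuous _ (pow_ne_zero 2 hs)) (measure_singleton 0)
  have hstd (b : ℝ) : (-(s ^ 2 / 2) - (0 - b)) / s = -(s / 2) + b / s := by field
  rw [(hgauss.conv hμ).integral_min_one_exp hnull, measureReal_conv_Ici]
  simp only [measureReal_gaussianReal_Ici _ _ hs, hstd]

lemma integral_integral_min_one_exp_add [IsFiniteMeasure μ] (hμ : IsExpBalanced μ)
    {Ω : Type*} [MeasurableSpace Ω] {P : Measure Ω} {V : Ω → ℝ} {s : ℝ≥0} (hs : s ≠ 0)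
    (hV : HasLaw V (gaussianReal (-(s ^ 2 / 2)) (s ^ 2)) P) :
    ∫ ω, ∫ b, min 1 (exp (V ω + b)) ∂μ ∂P = 2 * ∫ b, stdNormalCDF (-(s / 2) + b / s) ∂μ := by
  have hmeas : StronglyMeasurable fun v ↦ ∫ b, min 1 (exp (v + b)) ∂μ :=
    StronglyMeasurable.integral_prod_right'
      (f := fun p : ℝ × ℝ ↦ min 1 (exp (p.1 + p.2))) (by fun_prop)
  calc ∫ ω, ∫ b, min 1 (exp (V ω + b)) ∂μ ∂P
      = ∫ v, ∫ b, min 1 (exp (v + b)) ∂μ ∂(gaussianReal (-(s ^ 2 / 2)) (s ^ 2)) :=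
        hV.integral_comp hmeas.aestronglyMeasurable
    _ = ∫ w, min 1 (exp w) ∂(gaussianReal (-(s ^ 2 / 2)) (s ^ 2) ∗ μ) :=
        (integral_conv (.of_bound (by fun_prop) 1 (ae_of_all _ norm_min_one_exp_le_one))).symm
    _ = 2 * ∫ b, stdNormalCDF (-(s / 2) + b / s) ∂μ :=
        hμ.integral_min_one_exp_gaussianReal_conv hs

end IsExpBalanced

lemma hasLaw_logDensity_increment_stdGaussian {E : Type*} [NormedAddCommGroup E]
    [InnerProductSpace ℝ E] [FiniteDimensional ℝ E] [MeasurableSpace E] [BorelSpace E] (z : E) :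
    HasLaw (fun x ↦ -‖x + z‖ ^ 2 / 2 - -‖x‖ ^ 2 / 2)
      (gaussianReal (-(‖z‖₊ ^ 2 / 2)) (‖z‖₊ ^ 2)) (stdGaussian E) := by
  have hinner : HasLaw (innerSL ℝ z) (gaussianReal 0 (‖z‖₊ ^ 2)) (stdGaussian E) := by
    refine ⟨by fun_prop, ?_⟩
    rw [IsGaussian.map_eq_gaussianReal, integral_strongDual_stdGaussian,
      variance_dual_stdGaussian, innerSL_apply_norm]
    congr 1
    ext
    simp
  have hexpand : (fun x : E ↦ -‖x + z‖ ^ 2 / 2 - -‖x‖ ^ 2 / 2) =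
      fun x ↦ -(‖z‖ ^ 2 / 2) - innerSL ℝ z x := by
    ext x
    rw [innerSL_apply_apply, norm_add_sq_real, real_inner_comm]
    ring
  rw [hexpand]
  simpa using gaussianReal_const_sub hinner (-(‖z‖ ^ 2 / 2))

lemma hasLaw_toLp_stdGaussian (d : ℕ) :
    HasLaw (toLp 2) (stdGaussian (EuclideanSpace ℝ (Fin d))) (stdGaussian d) :=
  ⟨by fun_prop, map_pi_eq_stdGaussian⟩

instance isProbabilityMeasure_stdGaussian_pi (d : ℕ) : IsProbabilityMeasure (stdGaussian d) :=
  inferInstanceAs (IsProbabilityMeasure (Measure.pi _))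

lemma hasLaw_logDensity_increment_stdGaussian_pi {d : ℕ} {L : (Fin d → ℝ) → ℝ}
    (hL : ∀ x, L x = -(∑ i, x i ^ 2) / 2) (z : Fin d → ℝ) :
    HasLaw (fun x ↦ L (x + z) - L x)
      (gaussianReal (-(‖toLp 2 z‖₊ ^ 2 / 2)) (‖toLp 2 z‖₊ ^ 2)) (stdGaussian d) := by
  convert (hasLaw_logDensity_increment_stdGaussian (toLp 2 z)).comp (hasLaw_toLp_stdGaussian d)
    using 1
  ext x
  simp [hL, EuclideanSpace.real_norm_sq_eq]

lemma ae_ne_zero_stdGaussian_pi {d : ℕ} (hd : 1 ≤ d) : ∀ᵐ z ∂(stdGaussian d), z ≠ 0 := by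
  have := nullSingletonClass_gaussianReal (μ := 0) one_ne_zero
  have h := Measure.pi_hyperplane (fun _ : Fin d ↦ gaussianReal 0 1) ⟨0, hd⟩ 0
  filter_upwards [measure_eq_zero_iff_ae_notMem.1 h] with z hz hz₀
  exact hz (congrFun hz₀ _)

lemma integrable_sum_sq_stdGaussian_pi (d : ℕ) :
    Integrable (fun z ↦ ∑ i, z i ^ 2) (stdGaussian d) :=
  integrable_finsetSum _ fun i _ ↦ integrable_comp_eval (μ := fun _ ↦ gaussianReal 0 1) (i := i)
    (memLp_id_gaussianReal 2).integrable_sq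

lemma integral_prod_prod_weight_mul {X Z B : Type*} [MeasurableSpace X] [MeasurableSpace Z]
    [MeasurableSpace B] {μ : Measure X} {ν : Measure Z} {β : Measure B} [IsFiniteMeasure μ]
    [SFinite ν] [IsFiniteMeasure β] {g : Z → ℝ} (hg : Integrable g ν) {h : (X × Z) × B → ℝ}
    (hm : Measurable h) {C : ℝ} (hC : ∀ p, ‖h p‖ ≤ C) :
    ∫ p, g p.1.2 * h p ∂((μ.prod ν).prod β) =
      ∫ z, g z * ∫ x, ∫ b, h ((x, z), b) ∂β ∂μ ∂ν := by
  have hi : Integrable (fun p : (X × Z) × B ↦ g p.1.2 * h p) ((μ.prod ν).prod β) :=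
    ((hg.comp_snd μ).comp_fst β).mul_bdd hm.aestronglyMeasurable (ae_of_all _ hC)
  rw [integral_prod _ hi, integral_prod_symm _ hi.integral_prod_left]
  simp only [integral_const_mul]

lemma integral_weight_mul_min_one_exp {d : ℕ} {lam : ℝ} (hlam : 0 < lam)
    {L : (Fin d → ℝ) → ℝ} (hL : ∀ x, L x = -(∑ i, x i ^ 2) / 2)
    {ν : Measure (Fin d → ℝ)} [SFinite ν] (hν : ∀ᵐ z ∂ν, z ≠ 0)
    {β : Measure ℝ} [IsFiniteMeasure β] (hβ : IsExpBalanced β)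
    {g : (Fin d → ℝ) → ℝ} (hg : Integrable g ν) :
    ∫ p : ((Fin d → ℝ) × (Fin d → ℝ)) × ℝ,
        g p.1.2 * min 1 (exp (L (p.1.1 + lam • p.1.2) - L p.1.1 + p.2))
        ∂(((stdGaussian d).prod ν).prod β) =
      2 * ∫ p : ((Fin d → ℝ) × (Fin d → ℝ)) × ℝ,
        g p.1.2 * stdNormalCDF (-(lam / 2) * √(∑ i, p.1.2 i ^ 2) +
          p.2 / (lam * √(∑ i, p.1.2 i ^ 2)))
        ∂(((stdGaussian d).prod ν).prod β) := by
  have hLm : Measurable L := by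
    rw [funext hL]
    fun_prop
  rw [integral_prod_prod_weight_mul hg (by fun_prop) fun p ↦ norm_min_one_exp_le_one _,
    integral_prod_prod_weight_mul hg (by fun_prop) fun p ↦ norm_stdNormalCDF_le_one _,
    ← integral_const_mul]
  refine integral_congr_ae ?_
  filter_upwards [hν] with z hz
  have hs : ‖toLp 2 (lam • z)‖₊ ≠ 0 := by simpa using ⟨hlam.ne', hz⟩
  have hnorm : ‖toLp 2 (lam • z)‖ = lam * √(∑ i, z i ^ 2) := by
    rw [toLp_smul, norm_smul, norm_of_nonneg hlam.le, EuclideanSpace.norm_eq]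
    simp only [Real.norm_eq_abs, sq_abs]
  have hcond := hβ.integral_integral_min_one_exp_add hs
    (hasLaw_logDensity_increment_stdGaussian_pi hL (lam • z))
  rw [coe_nnnorm, hnorm] at hcond
  simp only [hcond, integral_const, probReal_univ, one_smul, neg_mul, div_mul_eq_mul_div,
    mul_left_comm]

theorem stmt19_general {d : ℕ} {lam : ℝ} (hlam : 0 < lam)
    {ν : Measure (Fin d → ℝ)} [IsFiniteMeasure ν] (hν : ∀ᵐ z ∂ν, z ≠ 0)
    (hν_sq : Integrable (fun z ↦ ∑ i, z i ^ 2) ν)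
    {β : Measure ℝ} [IsFiniteMeasure β] (hβ : IsExpBalanced β)
    {L : (Fin d → ℝ) → ℝ} (hL : ∀ x, L x = -(∑ i, x i ^ 2) / 2) :
    (∫ p : ((Fin d → ℝ) × (Fin d → ℝ)) × ℝ,
        (∑ i, (lam * p.1.2 i) ^ 2) *
          min 1 (exp (L (p.1.1 + lam • p.1.2) - L p.1.1 + p.2))
        ∂(((stdGaussian d).prod ν).prod β)) =
      2 * lam ^ 2 * ∫ p : ((Fin d → ℝ) × (Fin d → ℝ)) × ℝ,
        (∑ i, p.1.2 i ^ 2) *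
          stdNormalCDF (-(lam / 2) * √(∑ i, p.1.2 i ^ 2) + p.2 / (lam * √(∑ i, p.1.2 i ^ 2)))
        ∂(((stdGaussian d).prod ν).prod β) ∧
    (∫ p : ((Fin d → ℝ) × (Fin d → ℝ)) × ℝ,
        min 1 (exp (L (p.1.1 + lam • p.1.2) - L p.1.1 + p.2))
        ∂(((stdGaussian d).prod ν).prod β)) =
      2 * ∫ p : ((Fin d → ℝ) × (Fin d → ℝ)) × ℝ,
        stdNormalCDF (-(lam / 2) * √(∑ i, p.1.2 i ^ 2) + p.2 / (lam * √(∑ i, p.1.2 i ^ 2)))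
        ∂(((stdGaussian d).prod ν).prod β) := by
  constructor
  · simp only [mul_pow, ← Finset.mul_sum, mul_assoc]
    rw [integral_const_mul, integral_weight_mul_min_one_exp hlam hL hν hβ hν_sq, mul_left_comm]
  · simpa only [one_mul] using
      integral_weight_mul_min_one_exp hlam hL hν hβ (integrable_const (1 : ℝ))

/-- finite-dimensional Gaussian ESJD and acceptance-rate formulae.
With `X, Z ∼ N(0, I_d)` independent, `B` independent with density `ρ` satisfying
`ρ(b) = e^{−b} ρ(−b)`, and `L(x) = −‖x‖²/2`:
`E[‖λZ‖² min(1, exp(L(X+λZ) − L(X) + B))] = 2λ² E[‖Z‖² Φ(−(λ/2)‖Z‖ + B/(λ‖Z‖))]`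
and `E[min(1, exp(L(X+λZ) − L(X) + B))] = 2 E[Φ(−(λ/2)‖Z‖ + B/(λ‖Z‖))]`. -/
theorem stmt19 (d : ℕ) (hd : 1 ≤ d) (lam : ℝ) (hlam : 0 < lam)
    (ρ : ℝ → ℝ) (hρ_meas : Measurable ρ) (hρ_nonneg : ∀ b, 0 ≤ ρ b)
    (μB : Measure ℝ)
    (hμB : μB = volume.withDensity fun b => ENNReal.ofReal (ρ b))
    (hμB_prob : IsProbabilityMeasure μB)
    (hρ_sym : ∀ b, ρ b = Real.exp (-b) * ρ (-b))
    (L : (Fin d → ℝ) → ℝ) (hL : ∀ x, L x = -(∑ i, x i ^ 2) / 2) :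
    (∫ p : ((Fin d → ℝ) × (Fin d → ℝ)) × ℝ,
        (∑ i, (lam * p.1.2 i) ^ 2) *
          min 1 (Real.exp (L (p.1.1 + lam • p.1.2) - L p.1.1 + p.2))
        ∂(((stdGaussian d).prod (stdGaussian d)).prod μB)) =
      2 * lam ^ 2 * ∫ p : ((Fin d → ℝ) × (Fin d → ℝ)) × ℝ,
        (∑ i, p.1.2 i ^ 2) *
          stdNormalCDF (-(lam / 2) * Real.sqrt (∑ i, p.1.2 i ^ 2) +
            p.2 / (lam * Real.sqrt (∑ i, p.1.2 i ^ 2)))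
        ∂(((stdGaussian d).prod (stdGaussian d)).prod μB) ∧
    (∫ p : ((Fin d → ℝ) × (Fin d → ℝ)) × ℝ,
        min 1 (Real.exp (L (p.1.1 + lam • p.1.2) - L p.1.1 + p.2))
        ∂(((stdGaussian d).prod (stdGaussian d)).prod μB)) =
      2 * ∫ p : ((Fin d → ℝ) × (Fin d → ℝ)) × ℝ,
        stdNormalCDF (-(lam / 2) * Real.sqrt (∑ i, p.1.2 i ^ 2) +
          p.2 / (lam * Real.sqrt (∑ i, p.1.2 i ^ 2)))
        ∂(((stdGaussian d).prod (stdGaussian d)).prod μB) := by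
  exact stmt19_general hlam (ae_ne_zero_stdGaussian_pi hd) (integrable_sum_sq_stdGaussian_pi d)
    (hμB ▸ isExpBalanced_withDensity hρ_meas hρ_sym) hL
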